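/- arXiv:math/0606054 — 5 statements merged into one kernel-verified Lean document; each statement's English description precedes it below -/
import Mathlib

section
/- Let V be a 2n-dimensional real inner product space with compatible complex structure J, and let Q be a J-invariant symmetric bilinear form on V. Then the Ricci contraction of E_Q satisfies, for every orthonormal basis (e_1, …, e_{2n}) of V and all Y, Z in V: Σ_{i=1}^{2n} g(E_Q(e_i, Y)Z, e_i) = 2(n+2) Q(Y,Z) + (tr_g Q) g(Y,Z), where tr_g Q = Σ_i Q(e_i, e_i). -/
open RealInnerProductSpace

/-!
The Ricci contraction is the trace of the endomorphism `X ↦ E_Q(X, Y)Z`. Each of its summands is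
either a multiple of one of `id`, `Q̂`, `J`, `J ∘ Q̂`, or has rank one, `X ↦ f(X) W`, with trace
`f(W)`. As `J² = -1`, every rank-one trace is a multiple of `Q(Y, Z)`. Finally `J` is skew-adjoint
and `Q̂` is self-adjoint, so `J` and `J ∘ Q̂` are traceless.
-/

section Algebraic

variable {R M : Type*} [CommRing R] [AddCommGroup M] [Module R M]

/-- The endomorphism `X ↦ E_Q(X, Y)Z`, whose trace is the Ricci contraction of `E_Q`. The metric `g`
may be any bilinear form, and `Qhat` stands for the endomorphism `Q̂`. -/
def eQEnd (g Q : M →ₗ[R] M →ₗ[R] R) (J Qhat : M →ₗ[R] M) (Y Z : M) : M →ₗ[R] M :=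
  Q Y Z • LinearMap.id - (Q.flip Z).smulRight Y
    + g Y Z • Qhat - (g.flip Z).smulRight (Qhat Y)
    + Q (J Y) Z • J - (Q.flip Z ∘ₗ J).smulRight (J Y)
    - (2 : R) • (Q.flip Y ∘ₗ J).smulRight (J Z)
    + g (J Y) Z • (J ∘ₗ Qhat) - (g.flip Z ∘ₗ J).smulRight (J (Qhat Y))
    - (2 : R) • (g.flip Y ∘ₗ J).smulRight (J (Qhat Z))

theorem eQEnd_apply (g Q : M →ₗ[R] M →ₗ[R] R) (J Qhat : M →ₗ[R] M) (X Y Z : M) :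
    eQEnd g Q J Qhat Y Z X =
      Q Y Z • X - Q X Z • Y + g Y Z • Qhat X - g X Z • Qhat Y
        + Q (J Y) Z • J X - Q (J X) Z • J Y - (2 * Q (J X) Y) • J Z
        + g (J Y) Z • J (Qhat X) - g (J X) Z • J (Qhat Y)
        - (2 * g (J X) Y) • J (Qhat Z) := by
  simp [eQEnd, mul_smul]

theorem trace_eQEnd [Module.Free R M] [Module.Finite R M]
    {g Q : M →ₗ[R] M →ₗ[R] R} {J Qhat : M →ₗ[R] M}
    (hJJ : ∀ X, J (J X) = -X) (hQhat : ∀ X Y, g (Qhat X) Y = Q X Y) (Y Z : M) :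
    LinearMap.trace R M (eQEnd g Q J Qhat Y Z) =
      Module.finrank R M * Q Y Z + 4 * Q Z Y + LinearMap.trace R M Qhat * g Y Z
        + LinearMap.trace R M J * Q (J Y) Z
        + LinearMap.trace R M (J ∘ₗ Qhat) * g (J Y) Z := by
  simp only [eQEnd, map_add, map_sub, map_smul, LinearMap.trace_id, LinearMap.trace_smulRight,
    LinearMap.comp_apply, LinearMap.flip_apply, hJJ, map_neg, hQhat, smul_eq_mul]
  ring

end Algebraic

section Adjoint

variable {𝕜 V : Type*} [RCLike 𝕜] [NormedAddCommGroup V] [InnerProductSpace 𝕜 V]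
  [FiniteDimensional 𝕜 V]

theorem trace_adjoint (T : V →ₗ[𝕜] V) :
    LinearMap.trace 𝕜 V T.adjoint = star (LinearMap.trace 𝕜 V T) := by
  simp [LinearMap.trace_eq_sum_inner _ (stdOrthonormalBasis 𝕜 V), LinearMap.adjoint_inner_right]

theorem adjoint_eq_neg_of_inner_map_map_of_map_map_eq_neg {J : V →ₗ[𝕜] V}
    (hJiso : ∀ X Y, inner 𝕜 (J X) (J Y) = inner 𝕜 X Y) (hJJ : ∀ X, J (J X) = -X) :
    J.adjoint = -J := by
  refine ((LinearMap.eq_adjoint_iff _ _).2 fun X Y => ?_).symm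
  rw [LinearMap.neg_apply, inner_neg_left, ← hJiso X (J Y), hJJ, inner_neg_right]

end Adjoint

section RealInnerProduct

variable {V : Type*} [NormedAddCommGroup V] [InnerProductSpace ℝ V]

theorem sum_inner_map_self_eq_trace {ι : Type*} [Fintype ι] (T : V →ₗ[ℝ] V)
    (e : OrthonormalBasis ι ℝ V) : ∑ i, ⟪T (e i), e i⟫ = LinearMap.trace ℝ V T := by
  simp only [LinearMap.trace_eq_sum_inner T e, real_inner_comm (e _)]

theorem trace_comp_eq_zero_of_adjoint_eq_neg [FiniteDimensional ℝ V] {J A : V →ₗ[ℝ] V}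
    (hJ : J.adjoint = -J) (hA : A.adjoint = A) : LinearMap.trace ℝ V (J ∘ₗ A) = 0 := by
  have trace_eq_neg : LinearMap.trace ℝ V (J ∘ₗ A) = -LinearMap.trace ℝ V (J ∘ₗ A) :=
    calc LinearMap.trace ℝ V (J ∘ₗ A)
      _ = LinearMap.trace ℝ V (J ∘ₗ A).adjoint := by rw [trace_adjoint, star_trivial]
      _ = -LinearMap.trace ℝ V (A ∘ₗ J) := by
        rw [LinearMap.adjoint_comp, hJ, hA, LinearMap.comp_neg, map_neg]
      _ = -LinearMap.trace ℝ V (J ∘ₗ A) := by rw [LinearMap.trace_comp_comm']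
  exact self_eq_neg.1 trace_eq_neg

theorem eQ_ricci_contraction_general {ι : Type*} [Fintype ι]
    {J : V →ₗ[ℝ] V} (hJiso : ∀ X Y : V, ⟪J X, J Y⟫ = ⟪X, Y⟫) (hJJ : ∀ X : V, J (J X) = -X)
    {Q : V →ₗ[ℝ] V →ₗ[ℝ] ℝ} (hQsymm : ∀ X Y : V, Q X Y = Q Y X)
    {Qhat : V →ₗ[ℝ] V} (hQhat : ∀ X Y : V, ⟪Qhat X, Y⟫ = Q X Y)
    {E : V → V → V → V}
    (hE : ∀ X Y Z : V, E X Y Z =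
      Q Y Z • X - Q X Z • Y + ⟪Y, Z⟫ • Qhat X - ⟪X, Z⟫ • Qhat Y
        + Q (J Y) Z • J X - Q (J X) Z • J Y - (2 * Q (J X) Y) • J Z
        + ⟪J Y, Z⟫ • J (Qhat X) - ⟪J X, Z⟫ • J (Qhat Y)
        - (2 * ⟪J X, Y⟫) • J (Qhat Z))
    (e : OrthonormalBasis ι ℝ V) (Y Z : V) :
    ∑ i, ⟪E (e i) Y Z, e i⟫ =
      (Module.finrank ℝ V + 4) * Q Y Z + (∑ i, Q (e i) (e i)) * ⟪Y, Z⟫ := by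
  have : FiniteDimensional ℝ V := e.toBasis.finiteDimensional_of_finite
  have hJ : J.adjoint = -J := adjoint_eq_neg_of_inner_map_map_of_map_map_eq_neg hJiso hJJ
  have hQhat_adjoint : Qhat.adjoint = Qhat :=
    ((LinearMap.eq_adjoint_iff _ _).2 fun X Y => by
      rw [hQhat, real_inner_comm, hQhat, hQsymm]).symm
  have trace_J : LinearMap.trace ℝ V J = 0 :=
    trace_comp_eq_zero_of_adjoint_eq_neg hJ LinearMap.adjoint_id
  have trace_J_comp_Qhat : LinearMap.trace ℝ V (J ∘ₗ Qhat) = 0 :=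
    trace_comp_eq_zero_of_adjoint_eq_neg hJ hQhat_adjoint
  have trace_Qhat : LinearMap.trace ℝ V Qhat = ∑ i, Q (e i) (e i) := by
    simp only [← sum_inner_map_self_eq_trace Qhat e, hQhat]
  calc ∑ i, ⟪E (e i) Y Z, e i⟫
    _ = LinearMap.trace ℝ V (eQEnd (innerₗ V) Q J Qhat Y Z) := by
      simp only [← sum_inner_map_self_eq_trace _ e, eQEnd_apply, innerₗ_apply_apply, hE]
    _ = (Module.finrank ℝ V + 4) * Q Y Z + (∑ i, Q (e i) (e i)) * ⟪Y, Z⟫ := by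
      rw [trace_eQEnd hJJ hQhat, trace_J, trace_J_comp_Qhat, trace_Qhat, hQsymm Z Y,
        innerₗ_apply_apply]
      ring

end RealInnerProduct

/-- The Ricci contraction of `E_Q` equals `2(n+2) Q + (tr_g Q) g`. -/
theorem eQ_ricci_contraction
    (n : ℕ) (hn : 1 ≤ n)
    {V : Type*} [NormedAddCommGroup V] [InnerProductSpace ℝ V] [FiniteDimensional ℝ V]
    (hdim : Module.finrank ℝ V = 2 * n)
    (J : V →ₗ[ℝ] V)
    (hJiso : ∀ X Y : V, ⟪J X, J Y⟫ = ⟪X, Y⟫)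
    (hJJ : ∀ X : V, J (J X) = -X)
    (Q : V →ₗ[ℝ] V →ₗ[ℝ] ℝ)
    (hQsymm : ∀ X Y : V, Q X Y = Q Y X)
    (hQJ : ∀ X Y : V, Q (J X) (J Y) = Q X Y)
    (Qhat : V →ₗ[ℝ] V)
    (hQhat : ∀ X Y : V, ⟪Qhat X, Y⟫ = Q X Y)
    (E : V → V → V → V)
    (hE : ∀ X Y Z : V, E X Y Z =
      Q Y Z • X - Q X Z • Y + ⟪Y, Z⟫ • Qhat X - ⟪X, Z⟫ • Qhat Y
        + Q (J Y) Z • J X - Q (J X) Z • J Y - (2 * Q (J X) Y) • J Z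
        + ⟪J Y, Z⟫ • J (Qhat X) - ⟪J X, Z⟫ • J (Qhat Y)
        - (2 * ⟪J X, Y⟫) • J (Qhat Z))
    (e : OrthonormalBasis (Fin (2 * n)) ℝ V) :
    ∀ Y Z : V, ∑ i, ⟪E (e i) Y Z, e i⟫ =
      2 * ((n : ℝ) + 2) * Q Y Z + (∑ i, Q (e i) (e i)) * ⟪Y, Z⟫ := by
  intro Y Z
  rw [eQ_ricci_contraction_general hJiso hJJ hQsymm hQhat hE e, hdim, Nat.cast_mul, Nat.cast_two]
  ring
end

section
/- Let V be a 2n-dimensional real inner product space with compatible complex structure J. The assignment Q ↦ E_Q is injective on J-invariant symmetric bilinear forms: if Q₁ and Q₂ are J-invariant symmetric bilinear forms on V with E_{Q₁}(X,Y)Z = E_{Q₂}(X,Y)Z for all X, Y, Z in V, then Q₁ = Q₂. -/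
open RealInnerProductSpace

/-!
Pairing `E_Q(X, JX)JX` with `X` kills every term containing `⟪X, JX⟫` and leaves
`(Q(X, X) + 7 Q(JX, JX)) |X|²`. Replacing `X` by `JX` exchanges the two values of `Q`, and the
resulting `2 × 2` system has determinant `1 - 49 ≠ 0`. Hence these pairings, the analogue of
holomorphic sectional curvature, determine `Q(X, X)`, and `Q` is recovered by polarization.
-/

section ComplexStructure

variable {V : Type*} [NormedAddCommGroup V] [InnerProductSpace ℝ V] {J : V →ₗ[ℝ] V}

theorem inner_complexStructure_left (hJiso : ∀ X Y : V, ⟪J X, J Y⟫ = ⟪X, Y⟫)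
    (hJJ : ∀ X : V, J (J X) = -X) (X Y : V) : ⟪J X, Y⟫ = -⟪X, J Y⟫ := by
  rw [← hJiso X (J Y), hJJ, inner_neg_right, neg_neg]

theorem inner_complexStructure_self (hJiso : ∀ X Y : V, ⟪J X, J Y⟫ = ⟪X, Y⟫)
    (hJJ : ∀ X : V, J (J X) = -X) (X : V) : ⟪J X, X⟫ = 0 := by
  have skew := inner_complexStructure_left hJiso hJJ X X
  rw [real_inner_comm (J X) X] at skew
  linarith

variable (J) in
/-- The tensor `E_Q(X, Y)Z`. The endomorphism `Q̂` is a separate argument `A`, tied to `Q` by the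
hypothesis `⟪A X, Y⟫ = Q X Y`, since in infinite dimension not every `Q` is represented by an
endomorphism. -/
def eTensor (Q : LinearMap.BilinForm ℝ V) (A : V →ₗ[ℝ] V) (X Y Z : V) : V :=
  Q Y Z • X - Q X Z • Y + ⟪Y, Z⟫ • A X - ⟪X, Z⟫ • A Y
    + Q (J Y) Z • J X - Q (J X) Z • J Y - (2 * Q (J X) Y) • J Z
    + ⟪J Y, Z⟫ • J (A X) - ⟪J X, Z⟫ • J (A Y)
    - (2 * ⟪J X, Y⟫) • J (A Z)

variable (J) in
/-- The unnormalized holomorphic sectional curvature of `E_Q`, regarded as a curvature tensor, on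
the complex line spanned by `X`. -/
def eTensorHolomorphicSectional (Q : LinearMap.BilinForm ℝ V) (A : V →ₗ[ℝ] V) (X : V) : ℝ :=
  ⟪eTensor J Q A X (J X) (J X), X⟫

theorem eTensorHolomorphicSectional_eq (hJiso : ∀ X Y : V, ⟪J X, J Y⟫ = ⟪X, Y⟫)
    (hJJ : ∀ X : V, J (J X) = -X) {Q : LinearMap.BilinForm ℝ V} {A : V →ₗ[ℝ] V}
    (hA : ∀ X Y : V, ⟪A X, Y⟫ = Q X Y) (X : V) :
    eTensorHolomorphicSectional J Q A X = (Q X X + 7 * Q (J X) (J X)) * ⟪X, X⟫ := by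
  have inner_J_self : ⟪J X, X⟫ = 0 := inner_complexStructure_self hJiso hJJ X
  have inner_self_J : ⟪X, J X⟫ = 0 := by rw [real_inner_comm, inner_J_self]
  have inner_J_A : ⟪J (A (J X)), X⟫ = -Q (J X) (J X) := by
    rw [inner_complexStructure_left hJiso hJJ, hA]
  simp only [eTensorHolomorphicSectional, eTensor, inner_add_left, inner_sub_left,
    real_inner_smul_left, inner_neg_left, hJJ, hJiso, hA, inner_J_self, inner_self_J, inner_J_A]
  ring

theorem bilinForm_apply_self_mul_inner_eq (hJiso : ∀ X Y : V, ⟪J X, J Y⟫ = ⟪X, Y⟫)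
    (hJJ : ∀ X : V, J (J X) = -X) {Q : LinearMap.BilinForm ℝ V} {A : V →ₗ[ℝ] V}
    (hA : ∀ X Y : V, ⟪A X, Y⟫ = Q X Y) (X : V) :
    Q X X * ⟪X, X⟫ =
      (7 * eTensorHolomorphicSectional J Q A (J X) - eTensorHolomorphicSectional J Q A X) / 48 := by
  have at_JX : eTensorHolomorphicSectional J Q A (J X) =
      (Q (J X) (J X) + 7 * Q X X) * ⟪X, X⟫ := by
    rw [eTensorHolomorphicSectional_eq hJiso hJJ hA, hJJ, hJiso, map_neg, LinearMap.map_neg₂,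
      neg_neg]
  rw [at_JX, eTensorHolomorphicSectional_eq hJiso hJJ hA]
  ring

theorem bilinForm_apply_self_eq_of_eTensorHolomorphicSectional_eq
    (hJiso : ∀ X Y : V, ⟪J X, J Y⟫ = ⟪X, Y⟫) (hJJ : ∀ X : V, J (J X) = -X)
    {Q₁ Q₂ : LinearMap.BilinForm ℝ V} {A₁ A₂ : V →ₗ[ℝ] V}
    (hA₁ : ∀ X Y : V, ⟪A₁ X, Y⟫ = Q₁ X Y) (hA₂ : ∀ X Y : V, ⟪A₂ X, Y⟫ = Q₂ X Y)
    (hsec : ∀ X : V, eTensorHolomorphicSectional J Q₁ A₁ X = eTensorHolomorphicSectional J Q₂ A₂ X)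
    (X : V) : Q₁ X X = Q₂ X X := by
  rcases eq_or_ne X 0 with rfl | hX
  · simp only [map_zero]
  · apply mul_right_cancel₀ (inner_self_ne_zero (𝕜 := ℝ).mpr hX)
    rw [bilinForm_apply_self_mul_inner_eq hJiso hJJ hA₁, hsec, hsec,
      ← bilinForm_apply_self_mul_inner_eq hJiso hJJ hA₂]

theorem eQ_injective_general
    (hJiso : ∀ X Y : V, ⟪J X, J Y⟫ = ⟪X, Y⟫) (hJJ : ∀ X : V, J (J X) = -X)
    {Q₁ Q₂ : LinearMap.BilinForm ℝ V} (hQ₁ : Q₁.IsSymm) (hQ₂ : Q₂.IsSymm)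
    {A₁ A₂ : V →ₗ[ℝ] V}
    (hA₁ : ∀ X Y : V, ⟪A₁ X, Y⟫ = Q₁ X Y) (hA₂ : ∀ X Y : V, ⟪A₂ X, Y⟫ = Q₂ X Y)
    (hsec : ∀ X : V,
      eTensorHolomorphicSectional J Q₁ A₁ X = eTensorHolomorphicSectional J Q₂ A₂ X) :
    Q₁ = Q₂ :=
  LinearMap.BilinForm.ext_of_isSymm hQ₁ hQ₂
    (bilinForm_apply_self_eq_of_eTensorHolomorphicSectional_eq hJiso hJJ hA₁ hA₂ hsec)

end ComplexStructure

/-- The assignment `Q ↦ E_Q` is injective on `J`-invariant symmetric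
bilinear forms. -/
theorem eQ_injective
    (n : ℕ) (hn : 1 ≤ n)
    {V : Type*} [NormedAddCommGroup V] [InnerProductSpace ℝ V] [FiniteDimensional ℝ V]
    (hdim : Module.finrank ℝ V = 2 * n)
    (J : V →ₗ[ℝ] V)
    (hJiso : ∀ X Y : V, ⟪J X, J Y⟫ = ⟪X, Y⟫)
    (hJJ : ∀ X : V, J (J X) = -X)
    (Q₁ Q₂ : V →ₗ[ℝ] V →ₗ[ℝ] ℝ)
    (hQ₁symm : ∀ X Y : V, Q₁ X Y = Q₁ Y X)
    (hQ₁J : ∀ X Y : V, Q₁ (J X) (J Y) = Q₁ X Y)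
    (hQ₂symm : ∀ X Y : V, Q₂ X Y = Q₂ Y X)
    (hQ₂J : ∀ X Y : V, Q₂ (J X) (J Y) = Q₂ X Y)
    (Qhat₁ Qhat₂ : V →ₗ[ℝ] V)
    (hQhat₁ : ∀ X Y : V, ⟪Qhat₁ X, Y⟫ = Q₁ X Y)
    (hQhat₂ : ∀ X Y : V, ⟪Qhat₂ X, Y⟫ = Q₂ X Y)
    (E₁ E₂ : V → V → V → V)
    (hE₁ : ∀ X Y Z : V, E₁ X Y Z =
      Q₁ Y Z • X - Q₁ X Z • Y + ⟪Y, Z⟫ • Qhat₁ X - ⟪X, Z⟫ • Qhat₁ Y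
        + Q₁ (J Y) Z • J X - Q₁ (J X) Z • J Y - (2 * Q₁ (J X) Y) • J Z
        + ⟪J Y, Z⟫ • J (Qhat₁ X) - ⟪J X, Z⟫ • J (Qhat₁ Y)
        - (2 * ⟪J X, Y⟫) • J (Qhat₁ Z))
    (hE₂ : ∀ X Y Z : V, E₂ X Y Z =
      Q₂ Y Z • X - Q₂ X Z • Y + ⟪Y, Z⟫ • Qhat₂ X - ⟪X, Z⟫ • Qhat₂ Y
        + Q₂ (J Y) Z • J X - Q₂ (J X) Z • J Y - (2 * Q₂ (J X) Y) • J Z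
        + ⟪J Y, Z⟫ • J (Qhat₂ X) - ⟪J X, Z⟫ • J (Qhat₂ Y)
        - (2 * ⟪J X, Y⟫) • J (Qhat₂ Z))
    (hEq : ∀ X Y Z : V, E₁ X Y Z = E₂ X Y Z) :
    Q₁ = Q₂ := by
  refine eQ_injective_general hJiso hJJ ⟨hQ₁symm⟩ ⟨hQ₂symm⟩ hQhat₁ hQhat₂ fun X ↦ ?_
  simp only [eTensorHolomorphicSectional, eTensor, ← hE₁, ← hE₂, hEq]
end

section
/- Let V be a 2n-dimensional real inner product space with compatible complex structure J, let ξ be a unit vector with η(X) := g(ξ,X), let c be a real number, and set ω := c·η. Define the J-invariant symmetric bilinear form L(X,Y) := ω(X)ω(Y) + ω(JX)ω(JY) + (1/2)c² g(X,Y). Then E_L = 4c² (π + 2Φ), where 4π(X,Y)Z := g(Y,Z)X − g(X,Z)Y − 2g(JX,Y)JZ + g(JY,Z)JX − g(JX,Z)JY, and 8Φ(X,Y)Z := g(Y,Z)(η(X)ξ − η(JX)Jξ) − g(X,Z)(η(Y)ξ − η(JY)Jξ) + g(JY,Z)(η(X)Jξ + η(JX)ξ) − g(JX,Z)(η(Y)Jξ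 + η(JY)ξ) − 2g(JX,Y)(η(Z)Jξ + η(JZ)ξ) + (η(Y)η(Z) + η(JY)η(JZ))X − (η(X)η(Z) + η(JX)η(JZ))Y − (η(Y)η(JZ) − η(JY)η(Z))JX + (η(X)η(JZ) − η(JX)η(Z))JY + 2(η(X)η(JY) − η(JX)η(Y))JZ. -/
open RealInnerProductSpace

/-!
The tensor `E_Q` depends on `Q` only through `Q̂`, and does so linearly. The form `L` is
`c² (η ⊗ η + (η ∘ J) ⊗ (η ∘ J)) + (c² / 2) g`; its first summand corresponds to the endomorphism
`P X = η(X) ξ - η(JX) Jξ`, which commutes with `J`. Writing out `E` for `P` gives `8Φ`, and for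
the identity gives `8π`, so `E_L = c² · 8Φ + (c² / 2) · 8π`.
-/

section

variable {V : Type*} [NormedAddCommGroup V] [InnerProductSpace ℝ V]

/-- The tensor `E_Q` (the Kähler analogue of the Kulkarni–Nomizu product of `g` and `Q`), encoded
through the endomorphism `A = Q̂`, so that `Q X Y` is written `⟪A X, Y⟫`. -/
def kahlerKulkarniNomizu (J A : V →ₗ[ℝ] V) (X Y Z : V) : V :=
  ⟪A Y, Z⟫ • X - ⟪A X, Z⟫ • Y + ⟪Y, Z⟫ • A X - ⟪X, Z⟫ • A Y
    + ⟪A (J Y), Z⟫ • J X - ⟪A (J X), Z⟫ • J Y - (2 * ⟪A (J X), Y⟫) • J Z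
    + ⟪J Y, Z⟫ • J (A X) - ⟪J X, Z⟫ • J (A Y) - (2 * ⟪J X, Y⟫) • J (A Z)

theorem kahlerKulkarniNomizu_add (J A B : V →ₗ[ℝ] V) (X Y Z : V) :
    kahlerKulkarniNomizu J (A + B) X Y Z =
      kahlerKulkarniNomizu J A X Y Z + kahlerKulkarniNomizu J B X Y Z := by
  simp only [kahlerKulkarniNomizu, LinearMap.add_apply, inner_add_left, map_add]
  module

theorem kahlerKulkarniNomizu_smul (J A : V →ₗ[ℝ] V) (a : ℝ) (X Y Z : V) :
    kahlerKulkarniNomizu J (a • A) X Y Z = a • kahlerKulkarniNomizu J A X Y Z := by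
  simp only [kahlerKulkarniNomizu, LinearMap.smul_apply, real_inner_smul_left, map_smul]
  module

theorem kahlerKulkarniNomizu_id (J : V →ₗ[ℝ] V) (X Y Z : V) :
    kahlerKulkarniNomizu J LinearMap.id X Y Z =
      (2 : ℝ) • (⟪Y, Z⟫ • X - ⟪X, Z⟫ • Y - (2 * ⟪J X, Y⟫) • J Z
        + ⟪J Y, Z⟫ • J X - ⟪J X, Z⟫ • J Y) := by
  simp only [kahlerKulkarniNomizu, LinearMap.id_apply]
  module

/-- The endomorphism `X ↦ ⟪ξ, X⟫ ξ + ⟪Jξ, X⟫ Jξ`; for a unit vector `ξ` and a compatible complex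
structure `J` it is the orthogonal projection onto the complex line spanned by `ξ`. -/
noncomputable def complexLineMap (J : V →ₗ[ℝ] V) (ξ : V) : V →ₗ[ℝ] V :=
  InnerProductSpace.rankOne ℝ ξ ξ + InnerProductSpace.rankOne ℝ (J ξ) (J ξ)

variable {J : V →ₗ[ℝ] V} (hJiso : ∀ X Y : V, ⟪J X, J Y⟫ = ⟪X, Y⟫) (hJJ : ∀ X : V, J (J X) = -X)

include hJiso hJJ

theorem inner_map_left_eq_neg_inner_map_right (X Y : V) : ⟪J X, Y⟫ = -⟪X, J Y⟫ := by
  rw [← hJiso X (J Y), hJJ, inner_neg_right, neg_neg]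

theorem complexLineMap_apply (ξ X : V) :
    complexLineMap J ξ X = ⟪ξ, X⟫ • ξ - ⟪ξ, J X⟫ • J ξ := by
  simp [complexLineMap, inner_map_left_eq_neg_inner_map_right hJiso hJJ ξ X, sub_eq_add_neg]

theorem map_complexLineMap (ξ X : V) :
    J (complexLineMap J ξ X) = ⟪ξ, X⟫ • J ξ + ⟪ξ, J X⟫ • ξ := by
  rw [complexLineMap_apply hJiso hJJ, map_sub, map_smul, map_smul, hJJ, smul_neg, sub_neg_eq_add]

theorem inner_complexLineMap_left (ξ X Y : V) :
    ⟪complexLineMap J ξ X, Y⟫ = ⟪ξ, X⟫ * ⟪ξ, Y⟫ + ⟪ξ, J X⟫ * ⟪ξ, J Y⟫ := by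
  rw [complexLineMap_apply hJiso hJJ, inner_sub_left, real_inner_smul_left, real_inner_smul_left,
    inner_map_left_eq_neg_inner_map_right hJiso hJJ]
  ring

theorem inner_complexLineMap_map_left (ξ X Y : V) :
    ⟪complexLineMap J ξ (J X), Y⟫ = ⟪ξ, J X⟫ * ⟪ξ, Y⟫ - ⟪ξ, X⟫ * ⟪ξ, J Y⟫ := by
  rw [inner_complexLineMap_left hJiso hJJ, hJJ, inner_neg_right]
  ring

theorem kahlerKulkarniNomizu_complexLineMap (ξ X Y Z : V) :
    kahlerKulkarniNomizu J (complexLineMap J ξ) X Y Z =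
      ⟪Y, Z⟫ • (⟪ξ, X⟫ • ξ - ⟪ξ, J X⟫ • J ξ)
        - ⟪X, Z⟫ • (⟪ξ, Y⟫ • ξ - ⟪ξ, J Y⟫ • J ξ)
        + ⟪J Y, Z⟫ • (⟪ξ, X⟫ • J ξ + ⟪ξ, J X⟫ • ξ)
        - ⟪J X, Z⟫ • (⟪ξ, Y⟫ • J ξ + ⟪ξ, J Y⟫ • ξ)
        - (2 * ⟪J X, Y⟫) • (⟪ξ, Z⟫ • J ξ + ⟪ξ, J Z⟫ • ξ)
        + (⟪ξ, Y⟫ * ⟪ξ, Z⟫ + ⟪ξ, J Y⟫ * ⟪ξ, J Z⟫) • X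
        - (⟪ξ, X⟫ * ⟪ξ, Z⟫ + ⟪ξ, J X⟫ * ⟪ξ, J Z⟫) • Y
        - (⟪ξ, Y⟫ * ⟪ξ, J Z⟫ - ⟪ξ, J Y⟫ * ⟪ξ, Z⟫) • J X
        + (⟪ξ, X⟫ * ⟪ξ, J Z⟫ - ⟪ξ, J X⟫ * ⟪ξ, Z⟫) • J Y
        + (2 * (⟪ξ, X⟫ * ⟪ξ, J Y⟫ - ⟪ξ, J X⟫ * ⟪ξ, Y⟫)) • J Z := by
  simp only [kahlerKulkarniNomizu, inner_complexLineMap_map_left hJiso hJJ,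
    inner_complexLineMap_left hJiso hJJ, map_complexLineMap hJiso hJJ]
  simp only [complexLineMap_apply hJiso hJJ]
  module

theorem eq_smul_complexLineMap_add_smul_id {A : V →ₗ[ℝ] V} {ξ : V} {a b : ℝ}
    (hA : ∀ X Y : V, ⟪A X, Y⟫ = a * (⟪ξ, X⟫ * ⟪ξ, Y⟫ + ⟪ξ, J X⟫ * ⟪ξ, J Y⟫) + b * ⟪X, Y⟫) :
    A = a • complexLineMap J ξ + b • LinearMap.id := by
  ext X
  refine ext_inner_right ℝ fun Y => ?_
  rw [hA, LinearMap.add_apply, LinearMap.smul_apply, LinearMap.smul_apply, LinearMap.id_apply,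
    inner_add_left, real_inner_smul_left, real_inner_smul_left,
    inner_complexLineMap_left hJiso hJJ]

end

theorem eL_eq_four_c_sq_pi_plus_two_Phi_general
    {V : Type*} [NormedAddCommGroup V] [InnerProductSpace ℝ V]
    (J : V →ₗ[ℝ] V)
    (hJiso : ∀ X Y : V, ⟪J X, J Y⟫ = ⟪X, Y⟫)
    (hJJ : ∀ X : V, J (J X) = -X)
    (ξ : V)
    (η : V → ℝ) (hη : ∀ X : V, η X = ⟪ξ, X⟫)
    (c : ℝ)
    (ω : V → ℝ) (hω : ∀ X : V, ω X = c * η X)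
    (L : V → V → ℝ)
    (hL : ∀ X Y : V, L X Y = ω X * ω Y + ω (J X) * ω (J Y) + (1 / 2) * c ^ 2 * ⟪X, Y⟫)
    (Lhat : V →ₗ[ℝ] V)
    (hLhat : ∀ X Y : V, ⟪Lhat X, Y⟫ = L X Y)
    (E : V → V → V → V)
    (hE : ∀ X Y Z : V, E X Y Z =
      L Y Z • X - L X Z • Y + ⟪Y, Z⟫ • Lhat X - ⟪X, Z⟫ • Lhat Y
        + L (J Y) Z • J X - L (J X) Z • J Y - (2 * L (J X) Y) • J Z
        + ⟪J Y, Z⟫ • J (Lhat X) - ⟪J X, Z⟫ • J (Lhat Y)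
        - (2 * ⟪J X, Y⟫) • J (Lhat Z))
    (Pi Phi : V → V → V → V)
    (hPi : ∀ X Y Z : V, (4 : ℝ) • Pi X Y Z =
      ⟪Y, Z⟫ • X - ⟪X, Z⟫ • Y - (2 * ⟪J X, Y⟫) • J Z
        + ⟪J Y, Z⟫ • J X - ⟪J X, Z⟫ • J Y)
    (hPhi : ∀ X Y Z : V, (8 : ℝ) • Phi X Y Z =
      ⟪Y, Z⟫ • (η X • ξ - η (J X) • J ξ)
        - ⟪X, Z⟫ • (η Y • ξ - η (J Y) • J ξ)
        + ⟪J Y, Z⟫ • (η X • J ξ + η (J X) • ξ)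
        - ⟪J X, Z⟫ • (η Y • J ξ + η (J Y) • ξ)
        - (2 * ⟪J X, Y⟫) • (η Z • J ξ + η (J Z) • ξ)
        + (η Y * η Z + η (J Y) * η (J Z)) • X
        - (η X * η Z + η (J X) * η (J Z)) • Y
        - (η Y * η (J Z) - η (J Y) * η Z) • J X
        + (η X * η (J Z) - η (J X) * η Z) • J Y
        + (2 * (η X * η (J Y) - η (J X) * η Y)) • J Z) :
    ∀ X Y Z : V, E X Y Z = (4 * c ^ 2) • (Pi X Y Z + (2 : ℝ) • Phi X Y Z) := by
  intro X Y Z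
  have Lhat_eq : Lhat = c ^ 2 • complexLineMap J ξ + (c ^ 2 / 2) • LinearMap.id := by
    refine eq_smul_complexLineMap_add_smul_id hJiso hJJ fun X Y => ?_
    simp only [hLhat, hL, hω, hη]
    ring
  have eight_Phi : kahlerKulkarniNomizu J (complexLineMap J ξ) X Y Z = (8 : ℝ) • Phi X Y Z := by
    simp only [kahlerKulkarniNomizu_complexLineMap hJiso hJJ, hPhi, hη]
  have eight_Pi : kahlerKulkarniNomizu J LinearMap.id X Y Z = (2 : ℝ) • (4 : ℝ) • Pi X Y Z := by
    rw [kahlerKulkarniNomizu_id, hPi]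
  calc
    E X Y Z = kahlerKulkarniNomizu J Lhat X Y Z := by
      simp only [hE, kahlerKulkarniNomizu, hLhat]
    _ = c ^ 2 • (8 : ℝ) • Phi X Y Z + (c ^ 2 / 2) • (2 : ℝ) • (4 : ℝ) • Pi X Y Z := by
      rw [Lhat_eq, kahlerKulkarniNomizu_add, kahlerKulkarniNomizu_smul,
        kahlerKulkarniNomizu_smul, eight_Phi, eight_Pi]
    _ = (4 * c ^ 2) • (Pi X Y Z + (2 : ℝ) • Phi X Y Z) := by module

/-- With `ω = c·η` and
`L(X,Y) = ω(X)ω(Y) + ω(JX)ω(JY) + (1/2)c² g(X,Y)`, one has `E_L = 4c²(π + 2Φ)`. -/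
theorem eL_eq_four_c_sq_pi_plus_two_Phi
    (n : ℕ) (hn : 1 ≤ n)
    {V : Type*} [NormedAddCommGroup V] [InnerProductSpace ℝ V] [FiniteDimensional ℝ V]
    (hdim : Module.finrank ℝ V = 2 * n)
    (J : V →ₗ[ℝ] V)
    (hJiso : ∀ X Y : V, ⟪J X, J Y⟫ = ⟪X, Y⟫)
    (hJJ : ∀ X : V, J (J X) = -X)
    (ξ : V) (hξ : ‖ξ‖ = 1)
    (η : V → ℝ) (hη : ∀ X : V, η X = ⟪ξ, X⟫)
    (c : ℝ)
    (ω : V → ℝ) (hω : ∀ X : V, ω X = c * η X)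
    (L : V → V → ℝ)
    (hL : ∀ X Y : V, L X Y = ω X * ω Y + ω (J X) * ω (J Y) + (1 / 2) * c ^ 2 * ⟪X, Y⟫)
    (Lhat : V →ₗ[ℝ] V)
    (hLhat : ∀ X Y : V, ⟪Lhat X, Y⟫ = L X Y)
    (E : V → V → V → V)
    (hE : ∀ X Y Z : V, E X Y Z =
      L Y Z • X - L X Z • Y + ⟪Y, Z⟫ • Lhat X - ⟪X, Z⟫ • Lhat Y
        + L (J Y) Z • J X - L (J X) Z • J Y - (2 * L (J X) Y) • J Z
        + ⟪J Y, Z⟫ • J (Lhat X) - ⟪J X, Z⟫ • J (Lhat Y)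
        - (2 * ⟪J X, Y⟫) • J (Lhat Z))
    (Pi Phi : V → V → V → V)
    (hPi : ∀ X Y Z : V, (4 : ℝ) • Pi X Y Z =
      ⟪Y, Z⟫ • X - ⟪X, Z⟫ • Y - (2 * ⟪J X, Y⟫) • J Z
        + ⟪J Y, Z⟫ • J X - ⟪J X, Z⟫ • J Y)
    (hPhi : ∀ X Y Z : V, (8 : ℝ) • Phi X Y Z =
      ⟪Y, Z⟫ • (η X • ξ - η (J X) • J ξ)
        - ⟪X, Z⟫ • (η Y • ξ - η (J Y) • J ξ)
        + ⟪J Y, Z⟫ • (η X • J ξ + η (J X) • ξ)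
        - ⟪J X, Z⟫ • (η Y • J ξ + η (J Y) • ξ)
        - (2 * ⟪J X, Y⟫) • (η Z • J ξ + η (J Z) • ξ)
        + (η Y * η Z + η (J Y) * η (J Z)) • X
        - (η X * η Z + η (J X) * η (J Z)) • Y
        - (η Y * η (J Z) - η (J Y) * η Z) • J X
        + (η X * η (J Z) - η (J X) * η Z) • J Y
        + (2 * (η X * η (J Y) - η (J X) * η Y)) • J Z) :
    ∀ X Y Z : V, E X Y Z = (4 * c ^ 2) • (Pi X Y Z + (2 : ℝ) • Phi X Y Z) :=
  eL_eq_four_c_sq_pi_plus_two_Phi_general J hJiso hJJ ξ η hη c ω hω L hL Lhat hLhat E hE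
    Pi Phi hPi hPhi
end

section
/- Let V be a 2n-dimensional real inner product space with compatible complex structure J, and let α and ω be covectors on V with P the dual vector of ω. Suppose that for all X, Y, Z in V one has (1/(4(n+1))){2α(X)g(Y,Z) + α(Y)g(X,Z) + α(Z)g(X,Y) + α(JY)g(X,JZ) + α(JZ)g(X,JY)} = 2(n+2) ω(P) {2ω(X)g(Y,Z) + ω(Y)g(X,Z) + ω(Z)g(X,Y) + ω(JY)g(X,JZ) + ω(JZ)g(X,JY)}. Then α = 8(n+1)(n+2) ω(P) · ω; equivalently, setting τ := −4(n+1)(n+2) ω(P), one has α = −2τ ω and ‖α‖² = −τ³/((n+1)(n+2)). -/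
open RealInnerProductSpace

/-!
On the diagonal `X = Y = Z` the terms containing `J` drop out, because `J X` is orthogonal to `X`,
and each bracket collapses to four times the covector at `X` times `‖X‖²`. Hence the comparison
identity forces the two covectors to be proportional, and the squared norm of `α` is then computed
from that of `ω` by Parseval's identity.
-/

section

variable {V : Type*} [NormedAddCommGroup V] [InnerProductSpace ℝ V]

theorem inner_self_apply_eq_zero_of_isometry_of_sq_eq_neg {J : V → V}
    (hJiso : ∀ X Y : V, ⟪J X, J Y⟫ = ⟪X, Y⟫) (hJJ : ∀ X : V, J (J X) = -X) (X : V) :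
    ⟪X, J X⟫ = 0 := by
  have skew : ⟪X, J X⟫ = -⟪X, J X⟫ := by
    calc ⟪X, J X⟫ = ⟪J X, J (J X)⟫ := (hJiso X (J X)).symm
      _ = -⟪X, J X⟫ := by rw [hJJ, inner_neg_right, real_inner_comm]
  exact self_eq_neg.mp skew

/-- The bracket in the formula for the covariant derivative `∇ρ` of the Ricci tensor of a
Bochner-Kähler manifold, as a function of the covector `α`. The complex structure is replaced by
an arbitrary map `J`, so the expression is trilinear only when `J` is linear. -/
def ricciDerivForm (J : V → V) (α : V →ₗ[ℝ] ℝ) (X Y Z : V) : ℝ :=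
  2 * α X * ⟪Y, Z⟫ + α Y * ⟪X, Z⟫ + α Z * ⟪X, Y⟫ + α (J Y) * ⟪X, J Z⟫ + α (J Z) * ⟪X, J Y⟫

theorem ricciDerivForm_diag {J : V → V} {X : V} (hJ : ⟪X, J X⟫ = 0) (α : V →ₗ[ℝ] ℝ) :
    ricciDerivForm J α X X X = 4 * α X * ⟪X, X⟫ := by
  rw [ricciDerivForm, hJ]
  ring

theorem mul_apply_eq_of_mul_ricciDerivForm_diag_eq {J : V → V} (hJ : ∀ X, ⟪X, J X⟫ = 0)
    {α ω : V →ₗ[ℝ] ℝ} {a b : ℝ}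
    (h : ∀ X, a * ricciDerivForm J α X X X = b * ricciDerivForm J ω X X X) (X : V) :
    a * α X = b * ω X := by
  rcases eq_or_ne X 0 with rfl | hX
  · simp
  have hdiag := h X
  rw [ricciDerivForm_diag (hJ X), ricciDerivForm_diag (hJ X)] at hdiag
  refine mul_right_cancel₀ (inner_self_ne_zero (𝕜 := ℝ).mpr hX) ?_
  linear_combination hdiag / 4

theorem hasSum_sq_apply_hilbertBasis {ι : Type*} (b : HilbertBasis ι ℝ V) {ω : V → ℝ} {P : V}
    (hP : ∀ X, ⟪P, X⟫ = ω X) : HasSum (fun i => ω (b i) ^ 2) (ω P) := by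
  simpa only [real_inner_comm P, hP, ← sq] using b.hasSum_inner_mul_inner P P

end

theorem alpha_determined_general {ι V : Type*} [NormedAddCommGroup V] [InnerProductSpace ℝ V]
    {m : ℝ} (hm₁ : m + 1 ≠ 0) (hm₂ : m + 2 ≠ 0) {J : V → V} (hJ : ∀ X, ⟪X, J X⟫ = 0)
    {α ω : V →ₗ[ℝ] ℝ} {P : V} (hP : ∀ X, ⟪P, X⟫ = ω X) (b : HilbertBasis ι ℝ V)
    (h : ∀ X Y Z, 1 / (4 * (m + 1)) * ricciDerivForm J α X Y Z =
      2 * (m + 2) * ω P * ricciDerivForm J ω X Y Z) :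
    (∀ X, α X = 8 * (m + 1) * (m + 2) * ω P * ω X)
    ∧ ∀ τ : ℝ, τ = -4 * (m + 1) * (m + 2) * ω P →
        (∀ X, α X = -2 * τ * ω X)
        ∧ HasSum (fun i => α (b i) ^ 2) (-τ ^ 3 / ((m + 1) * (m + 2))) := by
  have hα (X : V) : α X = 8 * (m + 1) * (m + 2) * ω P * ω X := by
    have hprop := mul_apply_eq_of_mul_ricciDerivForm_diag_eq hJ (fun X => h X X X) X
    field_simp at hprop
    linear_combination hprop
  refine ⟨hα, fun τ hτ => ?_⟩
  have hατ (X : V) : α X = -2 * τ * ω X := by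
    rw [hα, hτ]
    ring
  have hnorm : -τ ^ 3 / ((m + 1) * (m + 2)) = (-2 * τ) ^ 2 * ω P := by
    rw [div_eq_iff (mul_ne_zero hm₁ hm₂)]
    linear_combination -τ ^ 2 * hτ
  refine ⟨hατ, ?_⟩
  simp only [hατ, mul_pow (-2 * τ), hnorm]
  exact (hasSum_sq_apply_hilbertBasis b hP).mul_left ((-2 * τ) ^ 2)

/-- Pointwise comparison of the Bochner–Kähler identity for `∇ρ` with the
expression obtained from a flat complex conformal connection: the hypothesis forces
`α = 8(n+1)(n+2)ω(P)·ω`; equivalently, with `τ = −4(n+1)(n+2)ω(P)`, `α = −2τω` and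
`‖α‖² = −τ³/((n+1)(n+2))`. -/
theorem alpha_determined
    (n : ℕ) (hn : 1 ≤ n)
    {V : Type*} [NormedAddCommGroup V] [InnerProductSpace ℝ V] [FiniteDimensional ℝ V]
    (hdim : Module.finrank ℝ V = 2 * n)
    (J : V →ₗ[ℝ] V)
    (hJiso : ∀ X Y : V, ⟪J X, J Y⟫ = ⟪X, Y⟫)
    (hJJ : ∀ X : V, J (J X) = -X)
    (α ω : V →ₗ[ℝ] ℝ) (P : V) (hP : ∀ X : V, ⟪P, X⟫ = ω X)
    (e : OrthonormalBasis (Fin (2 * n)) ℝ V)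
    (h : ∀ X Y Z : V,
      (1 / (4 * ((n : ℝ) + 1))) *
        (2 * α X * ⟪Y, Z⟫ + α Y * ⟪X, Z⟫ + α Z * ⟪X, Y⟫
          + α (J Y) * ⟪X, J Z⟫ + α (J Z) * ⟪X, J Y⟫) =
      2 * ((n : ℝ) + 2) * ω P *
        (2 * ω X * ⟪Y, Z⟫ + ω Y * ⟪X, Z⟫ + ω Z * ⟪X, Y⟫
          + ω (J Y) * ⟪X, J Z⟫ + ω (J Z) * ⟪X, J Y⟫)) :
    (∀ X : V, α X = 8 * ((n : ℝ) + 1) * ((n : ℝ) + 2) * ω P * ω X)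
    ∧ (∀ τ : ℝ, τ = -4 * ((n : ℝ) + 1) * ((n : ℝ) + 2) * ω P →
        (∀ X : V, α X = -2 * τ * ω X)
        ∧ ∑ i, (α (e i)) ^ 2 = -τ ^ 3 / (((n : ℝ) + 1) * ((n : ℝ) + 2))) := by
  have hJ := inner_self_apply_eq_zero_of_isometry_of_sq_eq_neg hJiso hJJ
  obtain ⟨hα, hτ⟩ := alpha_determined_general (by positivity) (by positivity) hJ hP
    e.toHilbertBasis h
  refine ⟨hα, fun τ hτ_eq => (hτ τ hτ_eq).imp_right fun hsum => ?_⟩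
  simpa only [OrthonormalBasis.coe_toHilbertBasis] using (hasSum_fintype _).unique hsum
end

section
/- Let V be a 2n-dimensional real inner product space with compatible complex structure J, let τ < 0 be a real number, and let ω be a covector on V with ‖ω‖² = −τ/(4(n+1)(n+2)). Define the symmetric bilinear forms S(X,Y) := −2ω(JX)ω(JY) − ‖ω‖² g(X,Y) and H := 4τ ω⊗ω − 2τ S. Then tr_g H := Σ_i H(e_i,e_i) = −τ²/(n+1) for any orthonormal basis (e_i) of V. -/
open RealInnerProductSpace

section Trace

variable {ι V : Type*} [Fintype ι] [NormedAddCommGroup V] [InnerProductSpace ℝ V]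
  {ω : V →ₗ[ℝ] ℝ} {P : V}

theorem sum_sq_apply_orthonormalBasis (hP : ∀ X : V, ⟪P, X⟫ = ω X)
    (e : OrthonormalBasis ι ℝ V) : ∑ i, ω (e i) ^ 2 = ω P := by
  simp only [← hP, e.sum_sq_inner_left, real_inner_self_eq_norm_sq]

theorem sum_sq_apply_linearIsometry_orthonormalBasis (hP : ∀ X : V, ⟪P, X⟫ = ω X)
    (J : V →ₗᵢ[ℝ] V) (e : OrthonormalBasis ι ℝ V) : ∑ i, ω (J (e i)) ^ 2 = ω P := by
  have : FiniteDimensional ℝ V := e.toBasis.finiteDimensional_of_finite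
  simpa only [OrthonormalBasis.map_apply, LinearIsometry.toLinearIsometryEquiv_apply] using
    sum_sq_apply_orthonormalBasis hP (e.map (J.toLinearIsometryEquiv rfl))

theorem sum_inner_self_orthonormalBasis (e : OrthonormalBasis ι ℝ V) :
    ∑ i, ⟪e i, e i⟫ = (Module.finrank ℝ V : ℝ) := by
  simp [Module.finrank_eq_card_basis e.toBasis]

theorem trace_S_eq_finrank (hP : ∀ X : V, ⟪P, X⟫ = ω X) (J : V →ₗᵢ[ℝ] V) {S : V → V → ℝ}
    (hS : ∀ X Y : V, S X Y = -2 * ω (J X) * ω (J Y) - ω P * ⟪X, Y⟫)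
    (e : OrthonormalBasis ι ℝ V) :
    ∑ i, S (e i) (e i) = -(Module.finrank ℝ V + 2) * ω P :=
  calc
    ∑ i, S (e i) (e i) = -2 * ∑ i, ω (J (e i)) ^ 2 - ω P * ∑ i, ⟪e i, e i⟫ := by
      simp only [hS, Finset.mul_sum, Finset.sum_sub_distrib, mul_assoc, sq]
    _ = -(Module.finrank ℝ V + 2) * ω P := by
      rw [sum_sq_apply_linearIsometry_orthonormalBasis hP, sum_inner_self_orthonormalBasis]
      ring

theorem trace_H_eq_finrank (hP : ∀ X : V, ⟪P, X⟫ = ω X) (J : V →ₗᵢ[ℝ] V) {S H : V → V → ℝ}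
    (hS : ∀ X Y : V, S X Y = -2 * ω (J X) * ω (J Y) - ω P * ⟪X, Y⟫) {τ : ℝ}
    (hH : ∀ X Y : V, H X Y = 4 * τ * ω X * ω Y - 2 * τ * S X Y)
    (e : OrthonormalBasis ι ℝ V) :
    ∑ i, H (e i) (e i) = 2 * τ * (Module.finrank ℝ V + 4) * ω P :=
  calc
    ∑ i, H (e i) (e i) = 4 * τ * ∑ i, ω (e i) ^ 2 - 2 * τ * ∑ i, S (e i) (e i) := by
      simp only [hH, Finset.mul_sum, Finset.sum_sub_distrib, mul_assoc, sq]
    _ = 2 * τ * (Module.finrank ℝ V + 4) * ω P := by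
      rw [sum_sq_apply_orthonormalBasis hP, trace_S_eq_finrank hP J hS]
      ring

/-- The half-dimension `n` is real, so that odd-dimensional `V` are covered too. -/
theorem trace_H_eq_general {n : ℝ} (hdim : (Module.finrank ℝ V : ℝ) = 2 * n)
    (J : V →ₗ[ℝ] V) (hJiso : ∀ X Y : V, ⟪J X, J Y⟫ = ⟪X, Y⟫) {τ : ℝ}
    (hP : ∀ X : V, ⟪P, X⟫ = ω X) (hnorm : ω P = -τ / (4 * (n + 1) * (n + 2)))
    {S H : V → V → ℝ}
    (hS : ∀ X Y : V, S X Y = -2 * ω (J X) * ω (J Y) - ω P * ⟪X, Y⟫)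
    (hH : ∀ X Y : V, H X Y = 4 * τ * ω X * ω Y - 2 * τ * S X Y)
    (e : OrthonormalBasis ι ℝ V) :
    ∑ i, H (e i) (e i) = -τ ^ 2 / (n + 1) := by
  have hn : 0 ≤ n := by linarith [(Module.finrank ℝ V).cast_nonneg (α := ℝ)]
  rw [trace_H_eq_finrank hP (J.isometryOfInner hJiso) hS hH e, hdim, hnorm]
  field_simp
  ring

end Trace

/-- With `τ < 0`, `‖ω‖² = −τ/(4(n+1)(n+2))`,
`S(X,Y) = −2ω(JX)ω(JY) − ‖ω‖²g(X,Y)` and `H = 4τ ω⊗ω − 2τ S`, one has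
`tr_g H = −τ²/(n+1)` (the Laplacian identity `Δτ = −τ²/(n+1)`). -/
theorem trace_H_eq
    (n : ℕ) (hn : 1 ≤ n)
    {V : Type*} [NormedAddCommGroup V] [InnerProductSpace ℝ V] [FiniteDimensional ℝ V]
    (hdim : Module.finrank ℝ V = 2 * n)
    (J : V →ₗ[ℝ] V)
    (hJiso : ∀ X Y : V, ⟪J X, J Y⟫ = ⟪X, Y⟫)
    (hJJ : ∀ X : V, J (J X) = -X)
    (τ : ℝ) (hτneg : τ < 0)
    (ω : V →ₗ[ℝ] ℝ) (P : V) (hP : ∀ X : V, ⟪P, X⟫ = ω X)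
    (hnorm : ω P = -τ / (4 * ((n : ℝ) + 1) * ((n : ℝ) + 2)))
    (S : V → V → ℝ)
    (hS : ∀ X Y : V, S X Y = -2 * ω (J X) * ω (J Y) - ω P * ⟪X, Y⟫)
    (H : V → V → ℝ)
    (hH : ∀ X Y : V, H X Y = 4 * τ * ω X * ω Y - 2 * τ * S X Y)
    (e : OrthonormalBasis (Fin (2 * n)) ℝ V) :
    ∑ i, H (e i) (e i) = -τ ^ 2 / ((n : ℝ) + 1) := by
  exact trace_H_eq_general (mod_cast hdim) J hJiso hP hnorm hS hH e
end
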